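/- arXiv:2502.17809 — 2 statements merged into one kernel-verified Lean document; each statement's English description precedes it below -/
import Mathlib

section
/- Let f be an exchangeable value distribution on ℝ_{≥0}^m with finite support on which every v has a unique maximizing coordinate i*(v). Then for all i ≠ i' with P(i*(v)=i) > 0 and P(i*(v)=i') > 0: (i) E[max_j v_j | i*(v)=i] = E[max_j v_j | i*(v)=i'], and (ii) E[v_i | i*(v)=i] ≥ E[v_i | i*(v)=i']. -/
open Finset

noncomputable section

namespace Screening

variable {m : ℕ} {ι : Type}

/-- The ex-ante probability of signal `s` under information structure `σ`. -/
def sigR (V : Finset (Fin m → ℝ)) (f : (Fin m → ℝ) → ℝ)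
    (σ : (Fin m → ℝ) → ι → ℝ) (s : ι) : ℝ :=
  ∑ v ∈ V, f v * σ v s

/-- The posterior mean value of product `i` upon receiving signal `s`. -/
def post (V : Finset (Fin m → ℝ)) (f : (Fin m → ℝ) → ℝ)
    (σ : (Fin m → ℝ) → ι → ℝ) (s : ι) (i : Fin m) : ℝ :=
  (∑ v ∈ V, f v * σ v s * v i) / sigR V f σ s

/-- `σ` is an information structure with finite signal space `S`. -/
def IsInfo (V : Finset (Fin m → ℝ)) (S : Finset ι)
    (σ : (Fin m → ℝ) → ι → ℝ) : Prop :=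
  ∀ v ∈ V, (∀ s, 0 ≤ σ v s) ∧ (∀ s, s ∉ S → σ v s = 0) ∧ (∑ s ∈ S, σ v s = 1)

/-- `x` is a feasible (random, unit-demand) allocation rule on `S`. -/
def IsAlloc (S : Finset ι) (x : ι → Fin m → ℝ) : Prop :=
  ∀ s ∈ S, (∀ i, 0 ≤ x s i) ∧ (∀ i, x s i ≤ 1) ∧ (∑ i, x s i ≤ 1)

/-- Incentive compatibility. -/
def IC (V : Finset (Fin m → ℝ)) (f : (Fin m → ℝ) → ℝ) (S : Finset ι)
    (σ : (Fin m → ℝ) → ι → ℝ) (x : ι → Fin m → ℝ) (p : ι → ℝ) : Prop :=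
  ∀ s ∈ S, 0 < sigR V f σ s → ∀ s' ∈ S,
    (∑ i, post V f σ s i * x s' i) - p s' ≤ (∑ i, post V f σ s i * x s i) - p s

/-- Individual rationality. -/
def IR (V : Finset (Fin m → ℝ)) (f : (Fin m → ℝ) → ℝ) (S : Finset ι)
    (σ : (Fin m → ℝ) → ι → ℝ) (x : ι → Fin m → ℝ) (p : ι → ℝ) : Prop :=
  ∀ s ∈ S, 0 < sigR V f σ s → 0 ≤ (∑ i, post V f σ s i * x s i) - p s

/-- Expected revenue of a mechanism. -/
def Rev (V : Finset (Fin m → ℝ)) (f : (Fin m → ℝ) → ℝ) (S : Finset ι)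
    (σ : (Fin m → ℝ) → ι → ℝ) (p : ι → ℝ) : ℝ :=
  ∑ s ∈ S, sigR V f σ s * p s

/-- Nonemptiness of `Fin m` as a finset, given `0 < m`. -/
lemma univNe (hm : 0 < m) : (univ : Finset (Fin m)).Nonempty :=
  univ_nonempty_iff.mpr (Fin.pos_iff_nonempty.mp hm)

/-- The maximum value `max_i v_i`. -/
def vmax (hm : 0 < m) (v : Fin m → ℝ) : ℝ :=
  univ.sup' (univNe hm) v

/-- The smallest-index maximizing coordinate of `v`. -/
def istar (hm : 0 < m) (v : Fin m → ℝ) : Fin m :=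
  (univ.filter (fun i => ∀ j, v j ≤ v i)).min' (by
    obtain ⟨i, -, hi⟩ := Finset.exists_max_image (univ : Finset (Fin m)) v (univNe hm)
    exact ⟨i, mem_filter.mpr ⟨mem_univ _, fun j => hi j (mem_univ _)⟩⟩)

/-- The probability that product `i` is the (selected) highest-value product. -/
def probTop (V : Finset (Fin m → ℝ)) (f : (Fin m → ℝ) → ℝ)
    (top : (Fin m → ℝ) → Fin m) (i : Fin m) : ℝ :=
  ∑ v ∈ V.filter (fun v => top v = i), f v

/-- The posterior mean value of product `j` conditional on `i` being the highest-value
product (i.e. conditional on the horizontal-disclosure signal `i`). -/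
def condMean (V : Finset (Fin m → ℝ)) (f : (Fin m → ℝ) → ℝ)
    (top : (Fin m → ℝ) → Fin m) (i j : Fin m) : ℝ :=
  (∑ v ∈ V.filter (fun v => top v = i), f v * v j) / probTop V f top i


/-- `f` is exchangeable: invariant under permutations of the coordinates. -/
def Exchangeable {m : ℕ} (f : (Fin m → ℝ) → ℝ) : Prop :=
  ∀ (π : Equiv.Perm (Fin m)) (v : Fin m → ℝ), (∀ i, 0 ≤ v i) → f (v ∘ π) = f v

/-- The conditional expectation of `max_j v_j` given that `i` is the top product. -/
def condMax {m : ℕ} (hm : 0 < m) (V : Finset (Fin m → ℝ)) (f : (Fin m → ℝ) → ℝ)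
    (top : (Fin m → ℝ) → Fin m) (i : Fin m) : ℝ :=
  (∑ v ∈ V.filter (fun v => top v = i), f v * vmax hm v) / probTop V f top i

/-!
Swapping the labels of products `i` and `i'` preserves the distribution and exchanges the events
`i*(v) = i` and `i*(v) = i'`. The maximum is invariant under the swap, whence (i); and
`E[v_i | i*(v) = i'] = E[v_{i'} | i*(v) = i] ≤ E[v_i | i*(v) = i]`, since `v_{i'} ≤ v_i` on the
event `i*(v) = i`, whence (ii).
-/

section StrictArgmax

variable {κ κ' α : Type*} [Preorder α] {v : κ → α} {i j : κ}

/-- `i` is the unique maximizer of `v`, the relation between a value profile `v` and its top product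
`i*(v)`. -/
def IsStrictArgmax (v : κ → α) (i : κ) : Prop :=
  ∀ j, j ≠ i → v j < v i

lemma IsStrictArgmax.le (h : IsStrictArgmax v i) (j : κ) : v j ≤ v i := by
  obtain rfl | hj := eq_or_ne j i
  · exact le_rfl
  · exact (h j hj).le

lemma IsStrictArgmax.unique (hi : IsStrictArgmax v i) (hj : IsStrictArgmax v j) : i = j := by
  by_contra hij
  exact (hj i hij).not_ge (hi.le j)

lemma IsStrictArgmax.apply_of_comp {e : κ' ≃ κ} {k : κ'} (h : IsStrictArgmax (v ∘ e) k) :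
    IsStrictArgmax v (e k) := by
  intro j hj
  have hlt := h (e.symm j) (mt e.symm_apply_eq.mp hj)
  rwa [Function.comp_apply, Function.comp_apply, e.apply_symm_apply] at hlt

end StrictArgmax

lemma vmax_comp_perm (hm : 0 < m) (v : Fin m → ℝ) (π : Equiv.Perm (Fin m)) :
    vmax hm (v ∘ π) = vmax hm v := by
  have : Nonempty (Fin m) := Fin.pos_iff_nonempty.mp hm
  rw [vmax, vmax, sup'_univ_eq_ciSup, sup'_univ_eq_ciSup]
  exact π.iSup_comp

section Symmetry

variable {V : Finset (Fin m → ℝ)} {f : (Fin m → ℝ) → ℝ} {top : (Fin m → ℝ) → Fin m}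
  {π : Equiv.Perm (Fin m)}

/-- Relabelling the products by `π` preserves the support `V`, the mass function `f` and the choice
of the top product. Product `j` of the profile `v ∘ π` is product `π j` of `v`, so the top product
of `v ∘ π` is sent by `π` to that of `v`. -/
structure IsSymmetry (V : Finset (Fin m → ℝ)) (f : (Fin m → ℝ) → ℝ)
    (top : (Fin m → ℝ) → Fin m) (π : Equiv.Perm (Fin m)) : Prop where
  comp_mem_iff : ∀ v, v ∘ π ∈ V ↔ v ∈ V
  mass_comp : ∀ v ∈ V, f (v ∘ π) = f v
  apply_top_comp : ∀ v ∈ V, π (top (v ∘ π)) = top v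

namespace IsSymmetry

lemma sum_top_eq_apply (h : IsSymmetry V f top π) (g : (Fin m → ℝ) → ℝ) (i : Fin m) :
    ∑ v ∈ V with top v = π i, f v * g (v ∘ π) = ∑ v ∈ V with top v = i, f v * g v := by
  refine sum_equiv (π.symm.arrowCongr (Equiv.refl ℝ)) (fun v ↦ ?_) fun v hv ↦ ?_
  · change v ∈ V.filter (top · = π i) ↔ v ∘ π ∈ V.filter (top · = i)
    rw [mem_filter, mem_filter, h.comp_mem_iff]
    refine and_congr_right fun hv ↦ ?_
    rw [← h.apply_top_comp v hv, π.apply_eq_iff_eq]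
  · change f v * g (v ∘ π) = f (v ∘ π) * g (v ∘ π)
    rw [h.mass_comp v (mem_filter.mp hv).1]

lemma probTop_apply (h : IsSymmetry V f top π) (i : Fin m) :
    probTop V f top (π i) = probTop V f top i := by
  simpa only [probTop, mul_one] using h.sum_top_eq_apply (fun _ ↦ 1) i

lemma condMean_apply (h : IsSymmetry V f top π) (i j : Fin m) :
    condMean V f top (π i) (π j) = condMean V f top i j :=
  congrArg₂ (· / ·) (h.sum_top_eq_apply (fun v ↦ v j) i) (h.probTop_apply i)

lemma condMax_apply (h : IsSymmetry V f top π) (hm : 0 < m) (i : Fin m) :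
    condMax hm V f top (π i) = condMax hm V f top i := by
  have hsum := h.sum_top_eq_apply (vmax hm) i
  simp only [vmax_comp_perm] at hsum
  rw [condMax, condMax, hsum, h.probTop_apply]

end IsSymmetry

lemma Exchangeable.comp_mem_iff (hf : Exchangeable f) (hsupp : ∀ v, v ∈ V ↔ f v ≠ 0)
    (hnonneg : ∀ v ∈ V, ∀ i, 0 ≤ v i) (π : Equiv.Perm (Fin m)) (v : Fin m → ℝ) :
    v ∘ π ∈ V ↔ v ∈ V := by
  have comp_mem (σ : Equiv.Perm (Fin m)) {w : Fin m → ℝ} (hw : w ∈ V) : w ∘ σ ∈ V := by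
    rwa [hsupp, hf σ w (hnonneg w hw), ← hsupp]
  refine ⟨fun hv ↦ ?_, comp_mem π⟩
  simpa only [Function.comp_assoc, π.self_comp_symm, Function.comp_id] using comp_mem π.symm hv

lemma Exchangeable.isSymmetry (hf : Exchangeable f) (hsupp : ∀ v, v ∈ V ↔ f v ≠ 0)
    (hnonneg : ∀ v ∈ V, ∀ i, 0 ≤ v i) (htop : ∀ v ∈ V, IsStrictArgmax v (top v))
    (π : Equiv.Perm (Fin m)) : IsSymmetry V f top π where
  comp_mem_iff := hf.comp_mem_iff hsupp hnonneg π
  mass_comp v hv := hf π v (hnonneg v hv)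
  apply_top_comp v hv :=
    (htop (v ∘ π) ((hf.comp_mem_iff hsupp hnonneg π v).mpr hv)).apply_of_comp.unique (htop v hv)

lemma condMean_le_condMean_self (hf : ∀ v ∈ V, 0 ≤ f v) (htop : ∀ v ∈ V, ∀ j, v j ≤ v (top v))
    (i j : Fin m) : condMean V f top i j ≤ condMean V f top i i := by
  have hprob : 0 ≤ probTop V f top i := sum_nonneg fun v hv ↦ hf v (mem_filter.mp hv).1
  refine div_le_div_of_nonneg_right (sum_le_sum fun v hv ↦ ?_) hprob
  obtain ⟨hvV, rfl⟩ := mem_filter.mp hv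
  exact mul_le_mul_of_nonneg_left (htop v hvV j) (hf v hvV)

end Symmetry

/-- under exchangeability, (i) the conditional expectation of the maximum
value given the identity of the top product does not depend on that identity, and
(ii) `E[v_i | i*(v) = i] ≥ E[v_i | i*(v) = i']`. -/
theorem exchangeable_condition (m : ℕ) (hm : 0 < m)
    (V : Finset (Fin m → ℝ)) (f : (Fin m → ℝ) → ℝ)
    (hV : V.Nonempty)
    (hfpos : ∀ v ∈ V, 0 < f v)
    (hfzero : ∀ v, v ∉ V → f v = 0)
    (hsum : ∑ v ∈ V, f v = 1)
    (hnn : ∀ v ∈ V, ∀ i, 0 ≤ v i)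
    (hexch : Exchangeable f)
    -- every value profile in the support has a unique maximizing coordinate i*(v)
    (istar : (Fin m → ℝ) → Fin m)
    (histar : ∀ v ∈ V, ∀ j, j ≠ istar v → v j < v (istar v)) :
    ∀ i i' : Fin m, i ≠ i' →
      0 < probTop V f istar i → 0 < probTop V f istar i' →
      condMax hm V f istar i = condMax hm V f istar i' ∧
      condMean V f istar i' i ≤ condMean V f istar i i := by
  intro i i' _ _ _
  have hsupp (v : Fin m → ℝ) : v ∈ V ↔ f v ≠ 0 :=
    ⟨fun hv ↦ (hfpos v hv).ne', not_imp_comm.mp (hfzero v)⟩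
  have hswap : IsSymmetry V f istar (Equiv.swap i i') :=
    hexch.isSymmetry hsupp hnn histar (Equiv.swap i i')
  constructor
  · simpa only [Equiv.swap_apply_right] using hswap.condMax_apply hm i'
  · calc
      condMean V f istar i' i = condMean V f istar i i' := by
        simpa only [Equiv.swap_apply_left, Equiv.swap_apply_right] using hswap.condMean_apply i i'
      _ ≤ condMean V f istar i i :=
        condMean_le_condMean_self (fun v hv ↦ (hfpos v hv).le)
          (fun v hv ↦ IsStrictArgmax.le (histar v hv)) i i'

end Screening
end
end

section
/- Let f be a generic value distribution on ℝ_{≥0}^m with finite support, i.e., for all i ≠ i', P(v_i = v_{i'}) = 0, so every v in the support has a unique maximizing coordinate i*(v). Suppose there exist a finite signal space S, an information structure σ, and an IC-IR mechanism (x, p) on S whose revenue equals the optimal welfare E[max_j v_j] (full surplus extraction). Then for all i ≠ i' with P(i*(v)=i) > 0 and P(i*(v)=i') > 0, one has E[v_i | i*(v)=i] ≥ E[v_i | i*(v)=i']. -/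
open Finset

noncomputable section

namespace Screening

variable {m : ℕ} {ι : Type}

/-!
Per signal, revenue is at most the expected value of the allocation, by individual rationality,
which is at most the expected top value. Extracting the full surplus makes both bounds tight at
every signal: the buyer pays exactly the expected value of what is allocated, and a signal that
can occur under `v` allocates the product `i*(v)` for sure. Thus the signals refine the partition
of the support by `i*`, and `E[v_j | i* = k]` is the average of the posterior means `ν_j(s)` over
the signals `s` that sell `k`. All utilities are zero, so no signal may gain by imitating a signal
`t` that sells `i` at the price `ν_i(t)`, that is, `ν_i(s) ≤ ν_i(t)` for all `s`. Averaging over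
the `t` that sell `i` and the `s` that sell `i'` gives the claim.
-/

lemma forall_le_of_forall_ne_lt {α β : Type*} [Preorder β] {v : α → β} {k : α}
    (hlt : ∀ j, j ≠ k → v j < v k) (j : α) : v j ≤ v k :=
  (eq_or_ne j k).elim (fun hj ↦ hj ▸ le_rfl) fun hj ↦ (hlt j hj).le

lemma pos_of_nonneg_of_forall_ne_lt {α β : Type*} [Nontrivial α] [Preorder β] [Zero β]
    {v : α → β} {k : α} (hv : ∀ j, 0 ≤ v j) (hlt : ∀ j, j ≠ k → v j < v k) : 0 < v k :=
  let ⟨j, hj⟩ := exists_ne k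
  (hv j).trans_lt (hlt j hj)

section Subprobability

variable {α R : Type*} [Fintype α] [CommRing R] [LinearOrder R] [IsStrictOrderedRing R]
  {v y : α → R} {k : α}

lemma sum_mul_le_of_forall_le (hy : ∀ j, 0 ≤ y j) (hy_sum : ∑ j, y j ≤ 1) (hk : 0 ≤ v k)
    (hmax : ∀ j, v j ≤ v k) : ∑ j, v j * y j ≤ v k :=
  calc ∑ j, v j * y j
    _ ≤ ∑ j, v k * y j := sum_le_sum fun j _ ↦ mul_le_mul_of_nonneg_right (hmax j) (hy j)
    _ = v k * ∑ j, y j := (mul_sum ..).symm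
    _ ≤ v k := mul_le_of_le_one_right hk hy_sum

lemma eq_single_of_le_sum_mul [DecidableEq α] (hy : ∀ j, 0 ≤ y j) (hy_sum : ∑ j, y j ≤ 1)
    (hk : 0 < v k) (hlt : ∀ j, j ≠ k → v j < v k) (hle : v k ≤ ∑ j, v j * y j) :
    y = Pi.single k 1 := by
  have loss_nonneg : ∀ j ∈ univ, 0 ≤ (v k - v j) * y j := fun j _ ↦
    mul_nonneg (sub_nonneg.2 (forall_le_of_forall_ne_lt hlt j)) (hy j)
  have loss_sum : ∑ j, (v k - v j) * y j = 0 := by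
    refine le_antisymm ?_ (sum_nonneg loss_nonneg)
    calc ∑ j, (v k - v j) * y j
      _ = v k * ∑ j, y j - ∑ j, v j * y j := by simp only [sub_mul, sum_sub_distrib, mul_sum]
      _ ≤ v k - v k := sub_le_sub (mul_le_of_le_one_right hk.le hy_sum) hle
      _ = 0 := sub_self _
  have hy_zero (j : α) (hj : j ≠ k) : y j = 0 :=
    (mul_eq_zero.1 ((sum_eq_zero_iff_of_nonneg loss_nonneg).1 loss_sum j (mem_univ j))).resolve_left
      (sub_pos.2 (hlt j hj)).ne'
  rw [Fintype.sum_eq_single k hy_zero] at hy_sum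
  rw [Fintype.sum_eq_single k fun j hj ↦ by rw [hy_zero j hj, mul_zero]] at hle
  have hy_one : y k = 1 := hy_sum.antisymm ((le_mul_iff_one_le_right hk).1 hle)
  ext j
  obtain rfl | hj := eq_or_ne j k
  · rw [hy_one, Pi.single_eq_same]
  · rw [hy_zero j hj, Pi.single_eq_of_ne hj]

end Subprobability

lemma vmax_eq_of_forall_le (hm : 0 < m) {v : Fin m → ℝ} {k : Fin m} (hmax : ∀ j, v j ≤ v k) :
    vmax hm v = v k :=
  (sup'_le _ _ fun j _ ↦ hmax j).antisymm (le_sup' v (mem_univ k))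

lemma injective_of_generic {V : Finset (Fin m → ℝ)} {f : (Fin m → ℝ) → ℝ}
    (hf : ∀ v ∈ V, 0 < f v)
    (hgen : ∀ i i' : Fin m, i ≠ i' → ∑ v ∈ V.filter (fun v => v i = v i'), f v = 0)
    {v : Fin m → ℝ} (hv : v ∈ V) : Function.Injective v := by
  intro i i' hvi
  by_contra hii'
  have hf_filter : ∀ w ∈ V.filter (fun w => w i = w i'), 0 < f w :=
    fun w hw ↦ hf w (mem_filter.1 hw).1
  exact (sum_pos hf_filter ⟨v, mem_filter.2 ⟨hv, hvi⟩⟩).ne' (hgen i i' hii')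

lemma lt_top_of_generic {V : Finset (Fin m → ℝ)} {f : (Fin m → ℝ) → ℝ}
    (hf : ∀ v ∈ V, 0 < f v)
    (hgen : ∀ i i' : Fin m, i ≠ i' → ∑ v ∈ V.filter (fun v => v i = v i'), f v = 0)
    {top : (Fin m → ℝ) → Fin m} (hmax : ∀ v ∈ V, ∀ j, v j ≤ v (top v)) :
    ∀ v ∈ V, ∀ j, j ≠ top v → v j < v (top v) := fun v hv j hj ↦
  (hmax v hv j).lt_of_ne ((injective_of_generic hf hgen hv).ne hj)

section Posterior

variable {V : Finset (Fin m → ℝ)} {f : (Fin m → ℝ) → ℝ} {σ : (Fin m → ℝ) → ι → ℝ} {s : ι}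

lemma sigR_nonneg (hw : ∀ v ∈ V, 0 ≤ f v * σ v s) : 0 ≤ sigR V f σ s := sum_nonneg hw

lemma sigR_mul_post (hw : ∀ v ∈ V, 0 ≤ f v * σ v s) (j : Fin m) :
    sigR V f σ s * post V f σ s j = ∑ v ∈ V, f v * σ v s * v j := by
  refine mul_div_cancel_of_imp' fun hr ↦ sum_eq_zero fun v hv ↦ ?_
  rw [(sum_eq_zero_iff_of_nonneg hw).1 hr v hv, zero_mul]

lemma sigR_mul_sum_post_mul (hw : ∀ v ∈ V, 0 ≤ f v * σ v s) (y : Fin m → ℝ) :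
    sigR V f σ s * ∑ j, post V f σ s j * y j = ∑ v ∈ V, f v * σ v s * ∑ j, v j * y j := by
  simp only [mul_sum, ← mul_assoc, sigR_mul_post hw, sum_mul]
  exact sum_comm

end Posterior

section FullSurplus

variable {V : Finset (Fin m → ℝ)} {f : (Fin m → ℝ) → ℝ} {S : Finset ι}
  {σ : (Fin m → ℝ) → ι → ℝ} {x : ι → Fin m → ℝ} {q : ι → ℝ} {top : (Fin m → ℝ) → Fin m}

lemma IsInfo.weight_nonneg (hσ : IsInfo V S σ) (hf : ∀ v ∈ V, 0 ≤ f v) (s : ι) :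
    ∀ v ∈ V, 0 ≤ f v * σ v s :=
  fun v hv ↦ mul_nonneg (hf v hv) ((hσ v hv).1 s)

lemma IsInfo.sum_sum_weight_mul (hσ : IsInfo V S σ) {T : Finset (Fin m → ℝ)} (hT : T ⊆ V)
    (g : (Fin m → ℝ) → ℝ) : ∑ s ∈ S, ∑ v ∈ T, f v * σ v s * g v = ∑ v ∈ T, f v * g v := by
  rw [sum_comm]
  refine sum_congr rfl fun v hv ↦ ?_
  rw [← sum_mul, ← mul_sum, (hσ v (hT hv)).2.2, mul_one]

lemma sigR_mul_price_le_value (hf : ∀ v ∈ V, 0 ≤ f v) (hσ : IsInfo V S σ)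
    (hIR : IR V f S σ x q) {s : ι} (hs : s ∈ S) :
    sigR V f σ s * q s ≤ ∑ v ∈ V, f v * σ v s * ∑ j, v j * x s j := by
  have hw := hσ.weight_nonneg hf s
  rw [← sigR_mul_sum_post_mul hw]
  obtain hr | hr := (sigR_nonneg hw).eq_or_lt
  · simp only [← hr, zero_mul, le_refl]
  · exact mul_le_mul_of_nonneg_left (sub_nonneg.1 (hIR s hs hr)) hr.le

lemma weight_mul_value_le_top (hf : ∀ v ∈ V, 0 ≤ f v) (hσ : IsInfo V S σ) (hx : IsAlloc S x)
    (htop : ∀ v ∈ V, 0 ≤ v (top v)) (hmax : ∀ v ∈ V, ∀ j, v j ≤ v (top v)) {s : ι} (hs : s ∈ S) :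
    ∀ v ∈ V, f v * σ v s * ∑ j, v j * x s j ≤ f v * σ v s * v (top v) := fun v hv ↦
  mul_le_mul_of_nonneg_left
    (sum_mul_le_of_forall_le (hx s hs).1 (hx s hs).2.2 (htop v hv) (hmax v hv))
    (hσ.weight_nonneg hf s v hv)

lemma sigR_mul_price_eq_top (hf : ∀ v ∈ V, 0 ≤ f v) (hσ : IsInfo V S σ) (hx : IsAlloc S x)
    (hIR : IR V f S σ x q) (htop : ∀ v ∈ V, 0 ≤ v (top v))
    (hmax : ∀ v ∈ V, ∀ j, v j ≤ v (top v))
    (hrev : Rev V f S σ q = ∑ v ∈ V, f v * v (top v)) {s : ι} (hs : s ∈ S) :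
    sigR V f σ s * q s = ∑ v ∈ V, f v * σ v s * v (top v) := by
  refine (sum_eq_sum_iff_of_le fun t ht ↦ ?_).1
    (hrev.trans (hσ.sum_sum_weight_mul subset_rfl fun v ↦ v (top v)).symm) s hs
  exact (sigR_mul_price_le_value hf hσ hIR ht).trans
    (sum_le_sum (weight_mul_value_le_top hf hσ hx htop hmax ht))

lemma weight_mul_value_eq_top (hf : ∀ v ∈ V, 0 ≤ f v) (hσ : IsInfo V S σ) (hx : IsAlloc S x)
    (hIR : IR V f S σ x q) (htop : ∀ v ∈ V, 0 ≤ v (top v))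
    (hmax : ∀ v ∈ V, ∀ j, v j ≤ v (top v))
    (hrev : Rev V f S σ q = ∑ v ∈ V, f v * v (top v)) {s : ι} (hs : s ∈ S) :
    ∀ v ∈ V, f v * σ v s * ∑ j, v j * x s j = f v * σ v s * v (top v) := by
  have hle := weight_mul_value_le_top hf hσ hx htop hmax hs
  refine (sum_eq_sum_iff_of_le hle).1 ((sum_le_sum hle).antisymm ?_)
  rw [← sigR_mul_price_eq_top hf hσ hx hIR htop hmax hrev hs]
  exact sigR_mul_price_le_value hf hσ hIR hs

lemma sum_post_mul_eq_price (hf : ∀ v ∈ V, 0 ≤ f v) (hσ : IsInfo V S σ) (hx : IsAlloc S x)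
    (hIR : IR V f S σ x q) (htop : ∀ v ∈ V, 0 ≤ v (top v))
    (hmax : ∀ v ∈ V, ∀ j, v j ≤ v (top v))
    (hrev : Rev V f S σ q = ∑ v ∈ V, f v * v (top v)) {s : ι} (hs : s ∈ S)
    (hr : 0 < sigR V f σ s) : ∑ j, post V f σ s j * x s j = q s := by
  refine mul_left_cancel₀ hr.ne' ?_
  rw [sigR_mul_sum_post_mul (hσ.weight_nonneg hf s),
    sigR_mul_price_eq_top hf hσ hx hIR htop hmax hrev hs]
  exact sum_congr rfl (weight_mul_value_eq_top hf hσ hx hIR htop hmax hrev hs)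

/-- The allocation rule `x` is efficient: a signal that occurs with positive probability under the
value profile `v` allocates the product `top v` with certainty. -/
def AllocatesTop (V : Finset (Fin m → ℝ)) (S : Finset ι) (σ : (Fin m → ℝ) → ι → ℝ)
    (x : ι → Fin m → ℝ) (top : (Fin m → ℝ) → Fin m) : Prop :=
  ∀ s ∈ S, ∀ v ∈ V, 0 < σ v s → x s = Pi.single (top v) 1

lemma allocatesTop_of_rev_eq (hf : ∀ v ∈ V, 0 < f v) (hσ : IsInfo V S σ) (hx : IsAlloc S x)
    (hIR : IR V f S σ x q) (htop : ∀ v ∈ V, 0 < v (top v))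
    (hlt : ∀ v ∈ V, ∀ j, j ≠ top v → v j < v (top v))
    (hrev : Rev V f S σ q = ∑ v ∈ V, f v * v (top v)) : AllocatesTop V S σ x top := by
  intro s hs v hv hσs
  have value_eq : ∑ j, v j * x s j = v (top v) :=
    mul_left_cancel₀ (mul_pos (hf v hv) hσs).ne' <|
      weight_mul_value_eq_top (fun w hw ↦ (hf w hw).le) hσ hx hIR
        (fun w hw ↦ (htop w hw).le) (fun w hw ↦ forall_le_of_forall_ne_lt (hlt w hw)) hrev hs v hv
  exact eq_single_of_le_sum_mul (hx s hs).1 (hx s hs).2.2 (htop v hv) (hlt v hv) value_eq.ge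

end FullSurplus

section SellingSignals

/-- The signals of positive probability at which product `k` is allocated with certainty. -/
def sellingSignals (V : Finset (Fin m → ℝ)) (f : (Fin m → ℝ) → ℝ) (S : Finset ι)
    (σ : (Fin m → ℝ) → ι → ℝ) (x : ι → Fin m → ℝ) (k : Fin m) : Finset ι :=
  S.filter fun s ↦ 0 < sigR V f σ s ∧ x s = Pi.single k 1

variable {V : Finset (Fin m → ℝ)} {f : (Fin m → ℝ) → ℝ} {S : Finset ι}
  {σ : (Fin m → ℝ) → ι → ℝ} {x : ι → Fin m → ℝ} {q : ι → ℝ} {top : (Fin m → ℝ) → Fin m}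

lemma mem_sellingSignals {k : Fin m} {s : ι} :
    s ∈ sellingSignals V f S σ x k ↔ s ∈ S ∧ 0 < sigR V f σ s ∧ x s = Pi.single k 1 :=
  mem_filter

lemma AllocatesTop.top_eq_iff_mem_sellingSignals (hxtop : AllocatesTop V S σ x top)
    (hf : ∀ v ∈ V, 0 < f v) (hσ : IsInfo V S σ) {s : ι} (hs : s ∈ S) {v : Fin m → ℝ}
    (hv : v ∈ V) (hσs : 0 < σ v s) (k : Fin m) :
    top v = k ↔ s ∈ sellingSignals V f S σ x k := by
  have hr : 0 < sigR V f σ s :=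
    sum_pos' (hσ.weight_nonneg (fun w hw ↦ (hf w hw).le) s) ⟨v, hv, mul_pos (hf v hv) hσs⟩
  have single_injective : Function.Injective fun l : Fin m ↦ (Pi.single l 1 : Fin m → ℝ) :=
    Pi.linearIndependent_single_one (Fin m) ℝ |>.injective
  rw [mem_sellingSignals, hxtop s hs v hv hσs, single_injective.eq_iff]
  exact ⟨fun h ↦ ⟨hs, hr, h⟩, fun h ↦ h.2.2⟩

lemma AllocatesTop.sum_filter_top_eq (hxtop : AllocatesTop V S σ x top)
    (hf : ∀ v ∈ V, 0 < f v) (hσ : IsInfo V S σ) (k : Fin m) (g : (Fin m → ℝ) → ℝ) :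
    ∑ v ∈ V.filter (fun v => top v = k), f v * g v
      = ∑ s ∈ sellingSignals V f S σ x k, ∑ v ∈ V, f v * σ v s * g v := by
  rw [← hσ.sum_sum_weight_mul (filter_subset _ _),
    ← sum_subset (filter_subset _ S : sellingSignals V f S σ x k ⊆ S)]
  · refine sum_congr rfl fun s hs ↦ sum_subset (filter_subset _ _) fun v hv hv_not ↦ ?_
    obtain hσs | hσs := ((hσ v hv).1 s).eq_or_lt
    · simp only [← hσs, mul_zero, zero_mul]
    · exact absurd (mem_filter.2 ⟨hv, (hxtop.top_eq_iff_mem_sellingSignals hf hσ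
        (mem_sellingSignals.1 hs).1 hv hσs k).2 hs⟩) hv_not
  · refine fun s hs hs_not ↦ sum_eq_zero fun v hv ↦ ?_
    obtain ⟨hv, hvk⟩ := mem_filter.1 hv
    obtain hσs | hσs := ((hσ v hv).1 s).eq_or_lt
    · simp only [← hσs, mul_zero, zero_mul]
    · exact absurd ((hxtop.top_eq_iff_mem_sellingSignals hf hσ hs hv hσs k).1 hvk) hs_not

lemma AllocatesTop.probTop_eq (hxtop : AllocatesTop V S σ x top)
    (hf : ∀ v ∈ V, 0 < f v) (hσ : IsInfo V S σ) (k : Fin m) :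
    probTop V f top k = ∑ s ∈ sellingSignals V f S σ x k, sigR V f σ s := by
  simpa only [probTop, sigR, mul_one] using hxtop.sum_filter_top_eq hf hσ k fun _ ↦ 1

lemma AllocatesTop.condMean_eq_centerMass (hxtop : AllocatesTop V S σ x top)
    (hf : ∀ v ∈ V, 0 < f v) (hσ : IsInfo V S σ) (k j : Fin m) :
    condMean V f top k j
      = (sellingSignals V f S σ x k).centerMass (sigR V f σ) (post V f σ · j) := by
  have hpost (s : ι) := sigR_mul_post (hσ.weight_nonneg (fun v hv ↦ (hf v hv).le) s) j
  simp only [condMean, centerMass, smul_eq_mul, hpost, hxtop.probTop_eq hf hσ,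
    hxtop.sum_filter_top_eq hf hσ k fun v ↦ v j, div_eq_inv_mul]

lemma AllocatesTop.condMean_mem_of_convex (hxtop : AllocatesTop V S σ x top)
    (hf : ∀ v ∈ V, 0 < f v) (hσ : IsInfo V S σ) {k j : Fin m} (hk : 0 < probTop V f top k)
    {A : Set ℝ} (hA : Convex ℝ A) (hpost : ∀ s ∈ sellingSignals V f S σ x k, post V f σ s j ∈ A) :
    condMean V f top k j ∈ A := by
  rw [hxtop.condMean_eq_centerMass hf hσ]
  rw [hxtop.probTop_eq hf hσ] at hk
  exact hA.centerMass_mem (fun s hs ↦ (mem_sellingSignals.1 hs).2.1.le) hk hpost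

lemma post_le_post_of_mem_sellingSignals (hIC : IC V f S σ x q)
    (hprice : ∀ s ∈ S, 0 < sigR V f σ s → ∑ j, post V f σ s j * x s j = q s)
    {i : Fin m} {s t : ι} (hs : s ∈ S) (hr : 0 < sigR V f σ s)
    (ht : t ∈ sellingSignals V f S σ x i) : post V f σ s i ≤ post V f σ t i := by
  obtain ⟨htS, hrt, hxt⟩ := mem_sellingSignals.1 ht
  have value_at_t (u : ι) : ∑ j, post V f σ u j * x t j = post V f σ u i := by
    simp [hxt, Pi.single_apply]
  have no_gain : post V f σ s i - q t ≤ 0 := by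
    simpa only [value_at_t, hprice s hs hr, sub_self] using hIC s hs hr t htS
  have price_t : post V f σ t i = q t := (value_at_t t).symm.trans (hprice t htS hrt)
  rw [price_t]
  exact sub_nonpos.1 no_gain

end SellingSignals

theorem full_surplus_necessity_general (hm : 0 < m) {V : Finset (Fin m → ℝ)}
    {f : (Fin m → ℝ) → ℝ} (hf : ∀ v ∈ V, 0 < f v) {top : (Fin m → ℝ) → Fin m}
    (htop : ∀ v ∈ V, 0 < v (top v)) (hlt : ∀ v ∈ V, ∀ j, j ≠ top v → v j < v (top v))
    (hfull : ∃ (κ : Type) (S : Finset κ) (σ : (Fin m → ℝ) → κ → ℝ)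
        (x : κ → Fin m → ℝ) (q : κ → ℝ),
        IsInfo V S σ ∧ IsAlloc S x ∧ IC V f S σ x q ∧ IR V f S σ x q ∧
        Rev V f S σ q = ∑ v ∈ V, f v * vmax hm v)
    {i i' : Fin m} (hi : 0 < probTop V f top i) (hi' : 0 < probTop V f top i') :
    condMean V f top i' i ≤ condMean V f top i i := by
  obtain ⟨κ, S, σ, x, q, hσ, hx, hIC, hIR, hrev⟩ := hfull
  have hmax (v) (hv : v ∈ V) : ∀ j, v j ≤ v (top v) := forall_le_of_forall_ne_lt (hlt v hv)
  rw [sum_congr rfl fun v hv ↦ by rw [vmax_eq_of_forall_le hm (hmax v hv)]] at hrev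
  have hxtop : AllocatesTop V S σ x top :=
    allocatesTop_of_rev_eq hf hσ hx hIR htop hlt hrev
  have hprice (s) (hs : s ∈ S) (hr : 0 < sigR V f σ s) : ∑ j, post V f σ s j * x s j = q s :=
    sum_post_mul_eq_price (fun v hv ↦ (hf v hv).le) hσ hx hIR (fun v hv ↦ (htop v hv).le)
      hmax hrev hs hr
  refine hxtop.condMean_mem_of_convex hf hσ hi' (convex_Iic _) fun s hs ↦ ?_
  refine hxtop.condMean_mem_of_convex hf hσ hi (convex_Ici _) fun t ht ↦ ?_
  obtain ⟨hsS, hr, -⟩ := mem_sellingSignals.1 hs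
  exact post_le_post_of_mem_sellingSignals hIC hprice hsS hr ht

/-- for a generic distribution, if some IC-IR mechanism (over some
information structure with finite signal space) extracts the full surplus, then for all
top-signals `i ≠ i'` of positive probability, `E[v_i | i*(v)=i] ≥ E[v_i | i*(v)=i']`. -/
theorem full_surplus_necessity (m : ℕ) (hm : 0 < m)
    (V : Finset (Fin m → ℝ)) (f : (Fin m → ℝ) → ℝ)
    (hV : V.Nonempty)
    (hfpos : ∀ v ∈ V, 0 < f v)
    (hfzero : ∀ v, v ∉ V → f v = 0)
    (hsum : ∑ v ∈ V, f v = 1)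
    (hnn : ∀ v ∈ V, ∀ i, 0 ≤ v i)
    -- genericity: for all i ≠ i', P(v_i = v_{i'}) = 0
    (hgen : ∀ i i' : Fin m, i ≠ i' →
      ∑ v ∈ V.filter (fun v => v i = v i'), f v = 0)
    -- hence every value profile in the support has a unique maximizing coordinate i*(v)
    (istar : (Fin m → ℝ) → Fin m)
    (histar : ∀ v ∈ V, ∀ j, v j ≤ v (istar v))
    -- some IC-IR mechanism extracts the full surplus E[max_j v_j]
    (hfull : ∃ (κ : Type) (S : Finset κ) (σ : (Fin m → ℝ) → κ → ℝ)
        (x : κ → Fin m → ℝ) (q : κ → ℝ),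
        IsInfo V S σ ∧ IsAlloc S x ∧ IC V f S σ x q ∧ IR V f S σ x q ∧
        Rev V f S σ q = ∑ v ∈ V, f v * vmax hm v) :
    ∀ i i' : Fin m, i ≠ i' →
      0 < probTop V f istar i → 0 < probTop V f istar i' →
      condMean V f istar i' i ≤ condMean V f istar i i := by
  intro i i' hii' hi hi'
  have : Nontrivial (Fin m) := ⟨i, i', hii'⟩
  have hlt := lt_top_of_generic hfpos hgen histar
  have htop (v) (hv : v ∈ V) : 0 < v (istar v) :=
    pos_of_nonneg_of_forall_ne_lt (hnn v hv) (hlt v hv)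
  exact full_surplus_necessity_general hm hfpos htop hlt hfull hi hi'

end Screening
end
end
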